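/- In the bounded-degree uniform attachment process with m ≥ 2, for any s ∈ ℕ, any integer r ≥ 3 and any n_0, with high probability G_n contains at least s cycles of length r all of whose vertices lie in [n] \ [n_0]. -/

import Mathlib

open MeasureTheory ProbabilityTheory Filter Topology
open scoped ENNReal

/-- The degree of a vertex in a simple graph on `ℕ` (the number of its neighbours). -/
noncomputable def graphDeg (g : SimpleGraph ℕ) (v : ℕ) : ℕ := (g.neighborSet v).ncard

/-- The complete graph on the vertex set `[m] = {1,…,m}`, viewed as a simple graph on `ℕ`. -/
def initGraph (m : ℕ) : SimpleGraph ℕ :=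
  SimpleGraph.fromRel (fun a b => a ∈ Finset.Icc 1 m ∧ b ∈ Finset.Icc 1 m)

/-- The graph obtained from `g` by joining the (new) vertex `v` to every vertex of `S`. -/
def attachStep (g : SimpleGraph ℕ) (v : ℕ) (S : Finset ℕ) : SimpleGraph ℕ :=
  g ⊔ SimpleGraph.fromRel (fun a b => a = v ∧ b ∈ S)

/-- The set of vertices of `[n] = {1,…,n}` whose degree in `g` is strictly less than `d`. -/
noncomputable def lowDegSet (d : ℕ) (g : SimpleGraph ℕ) (n : ℕ) : Finset ℕ :=
  (Finset.Icc 1 n).filter (fun v => graphDeg g v < d)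

/-- `IsUAProcess m d μ G` says that `(G n)_{n ≥ m}` (as random graphs on `ℕ`, with `G n`
supported on the vertex set `[n] = {1,…,n}`) is the bounded-degree uniform attachment
process: `G m` is the complete graph on `[m]`, and `G (n+1)` is obtained from `G n` by
joining the new vertex `n+1` to a uniformly chosen `m`-element subset of the set of
vertices of `G n` of degree less than `d`, conditionally on `G n` and independently of
the past (note that `G n` determines the whole past of the process). -/
def IsUAProcess (m d : ℕ) {Ω : Type*} [MeasurableSpace Ω] (μ : Measure Ω)
    (G : ℕ → Ω → SimpleGraph ℕ) : Prop :=
  (∀ n g, MeasurableSet {ω | G n ω = g}) ∧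
  (∀ ω, G m ω = initGraph m) ∧
  (∀ n, m ≤ n → ∀ g : SimpleGraph ℕ, ∀ S : Finset ℕ,
    S ⊆ lowDegSet d g n → S.card = m →
    μ ({ω | G (n + 1) ω = attachStep g (n + 1) S} ∩ {ω | G n ω = g})
      = μ {ω | G n ω = g} / (((lowDegSet d g n).card.choose m : ℝ≥0∞)))

/-- The number of cycles of length `r` in `g` all of whose vertices are `> n₀`. -/
noncomputable def cycleCountOutside (g : SimpleGraph ℕ) (r n₀ : ℕ) : ℕ :=
  {C : g.Subgraph | C.verts ⊆ {v : ℕ | n₀ < v} ∧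
    Nonempty (C.coe ≃g SimpleGraph.cycleGraph r)}.ncard

/-!
Call a path of `G n` with `K ≥ 1` edges open if its two ends can still receive edges. The new
vertex `n + 1` closes an open path into a cycle of length `K + 2` with probability at least
`1 / n ^ 2`, and the cycles so obtained have distinct largest vertices.

Open paths are abundant. The new vertex, linked to exactly one end of an open path, starts an open
path with one edge more, and does so with probability of order `1 / n`, while each existing open
path is destroyed with probability `O(1 / n)`. Hence, by induction on `K`, their expected number
grows linearly in `n`. Only the present graph enters this estimate, so it persists after restricting
to any event determined by `G N` for a fixed `N`.

Let `u n` be the probability that `G n` has fewer than `s` largest vertices of cycles. It is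
non-increasing; suppose that its limit were positive. Restricting the linear growth to the event at
a time `N` with `u N` close to the limit shows that the expected number of such vertices, capped
at `s`, increases at each step by at least a constant over `n`. This contradicts the divergence of
the harmonic series.
-/

open SimpleGraph
open scoped Finset BigOperators

section AttachStep

variable {g : SimpleGraph ℕ} {v a b : ℕ} {S S' : Finset ℕ}

theorem attachStep_adj :
    (attachStep g v S).Adj a b ↔ g.Adj a b ∨ a ≠ b ∧ (a = v ∧ b ∈ S ∨ b = v ∧ a ∈ S) := by
  simp [attachStep, fromRel_adj]

theorem le_attachStep : g ≤ attachStep g v S := le_sup_left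

theorem attachStep_adj_of_ne (ha : a ≠ v) (hb : b ≠ v) :
    (attachStep g v S).Adj a b ↔ g.Adj a b := by
  simp [attachStep_adj, ha, hb]

theorem attachStep_adj_self (hv : v ∉ g.support) (hvS : v ∉ S) :
    (attachStep g v S).Adj v b ↔ b ∈ S := by
  have hb : ¬ g.Adj v b := fun h => hv ⟨b, h⟩
  simp only [attachStep_adj, hb, hvS, false_or, true_and, and_false, or_false]
  exact and_iff_right_of_imp fun h => (ne_of_mem_of_not_mem h hvS).symm

theorem support_attachStep_subset :
    (attachStep g v S).support ⊆ insert v (g.support ∪ S) := by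
  rintro a ⟨b, hab⟩
  rcases attachStep_adj.1 hab with h | ⟨-, ⟨rfl, -⟩ | ⟨-, h⟩⟩
  · exact Or.inr (Or.inl ⟨b, h⟩)
  · exact Or.inl rfl
  · exact Or.inr (Or.inr h)

theorem injOn_attachStep (hv : v ∉ g.support) : Set.InjOn (attachStep g v) {S | v ∉ S} := by
  intro S hS S' hS' h
  ext b
  rw [← attachStep_adj_self hv hS, h, attachStep_adj_self hv hS']

theorem graphDeg_attachStep_self (hv : v ∉ g.support) (hvS : v ∉ S) :
    graphDeg (attachStep g v S) v = #S := by
  have : (attachStep g v S).neighborSet v = S := Set.ext fun _ => attachStep_adj_self hv hvS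
  rw [graphDeg, this, Set.ncard_coe_finset]

theorem graphDeg_attachStep_of_notMem (ha : a ≠ v) (haS : a ∉ S) :
    graphDeg (attachStep g v S) a = graphDeg g a := by
  simp [graphDeg, neighborSet, attachStep_adj, ha, haS]

theorem graphDeg_attachStep_of_mem (ha : a ≠ v) (haS : a ∈ S) (hv : v ∉ g.support)
    (hfin : (g.neighborSet a).Finite) :
    graphDeg (attachStep g v S) a = graphDeg g a + 1 := by
  have hnbr : (attachStep g v S).neighborSet a = insert v (g.neighborSet a) := by
    ext b
    simp only [mem_neighborSet, attachStep_adj, ha, haS, false_and, and_true, false_or,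
      Set.mem_insert_iff]
    grind
  have hva : v ∉ g.neighborSet a := fun h => hv ⟨a, Adj.symm h⟩
  rw [graphDeg, hnbr, Set.ncard_insert_of_notMem hva hfin, graphDeg]

theorem graphDeg_attachStep (ha : a ≠ v) (hv : v ∉ g.support) (hfin : (g.neighborSet a).Finite) :
    graphDeg (attachStep g v S) a = graphDeg g a + if a ∈ S then 1 else 0 := by
  split_ifs with haS
  · exact graphDeg_attachStep_of_mem ha haS hv hfin
  · exact graphDeg_attachStep_of_notMem ha haS

end AttachStep

section Admissible

variable {m d n : ℕ} {g : SimpleGraph ℕ} {S : Finset ℕ}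

/-- Deterministic bounds satisfied by every graph that the attachment process with parameter `m`
can reach at time `n`. The bound on individual degrees keeps the last `m` vertices available,
whereas the bound on the sum of the degrees makes a positive proportion of `[n]` available. -/
structure Admissible (m n : ℕ) (g : SimpleGraph ℕ) : Prop where
  support_subset : g.support ⊆ Finset.Icc 1 n
  deg_add_le : ∀ v ∈ Finset.Icc 1 n, graphDeg g v + v ≤ n + m
  sum_deg_le : ∑ v ∈ Finset.Icc 1 n, graphDeg g v ≤ 2 * m * n

theorem lowDegSet_subset : lowDegSet d g n ⊆ Finset.Icc 1 n := Finset.filter_subset _ _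

theorem card_lowDegSet_le : #(lowDegSet d g n) ≤ n := by
  simpa using Finset.card_le_card (lowDegSet_subset (d := d) (g := g) (n := n))

theorem graphDeg_initGraph_le (v : ℕ) : graphDeg (initGraph m) v ≤ m := by
  have hsub : (initGraph m).neighborSet v ⊆ Finset.Icc 1 m := fun w hw => by
    simp only [initGraph, mem_neighborSet, fromRel_adj] at hw
    exact hw.2.elim And.right And.left
  simpa [graphDeg] using Set.ncard_le_ncard hsub (Finset.finite_toSet _)

theorem admissible_initGraph : Admissible m m (initGraph m) where
  support_subset := by
    rintro a ⟨b, hab⟩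
    simp only [initGraph, fromRel_adj] at hab
    exact hab.2.elim And.left And.right
  deg_add_le v hv := by
    have := (Finset.mem_Icc.1 hv).2
    have := graphDeg_initGraph_le (m := m) v
    omega
  sum_deg_le :=
    calc ∑ v ∈ Finset.Icc 1 m, graphDeg (initGraph m) v ≤ ∑ _v ∈ Finset.Icc 1 m, m :=
          Finset.sum_le_sum fun v _ => graphDeg_initGraph_le v
      _ = m * m := by simp
      _ ≤ 2 * m * m := Nat.mul_le_mul_right m (by omega)

namespace Admissible

theorem succ_notMem_support (hg : Admissible m n g) : n + 1 ∉ g.support := fun h => by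
  simpa using hg.support_subset h

theorem finite_neighborSet (hg : Admissible m n g) (v : ℕ) : (g.neighborSet v).Finite :=
  (Finset.finite_toSet _).subset fun _ hw => hg.support_subset ⟨v, Adj.symm hw⟩

theorem attachStep (hg : Admissible m n g) (hS : S ⊆ Finset.Icc 1 n) (hSm : #S = m) :
    Admissible m (n + 1) (attachStep g (n + 1) S) := by
  have hnS : n + 1 ∉ S := fun h => by simpa using hS h
  have hnew := graphDeg_attachStep_self hg.succ_notMem_support hnS
  have hold : ∀ v ∈ Finset.Icc 1 n,
      graphDeg (_root_.attachStep g (n + 1) S) v = graphDeg g v + if v ∈ S then 1 else 0 :=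
    fun v hv => graphDeg_attachStep (by have := (Finset.mem_Icc.1 hv).2; omega)
      hg.succ_notMem_support (hg.finite_neighborSet v)
  refine ⟨support_attachStep_subset.trans ?_, fun v hv => ?_, ?_⟩
  · rw [Set.insert_subset_iff]
    exact ⟨by simp, (Set.union_subset hg.support_subset (by exact_mod_cast hS)).trans
      (by exact_mod_cast Finset.Icc_subset_Icc_right n.le_succ)⟩
  · rcases eq_or_ne v (n + 1) with rfl | hne
    · omega
    · have hv' : v ∈ Finset.Icc 1 n := by rw [Finset.mem_Icc] at hv ⊢; omega
      have := hg.deg_add_le v hv'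
      rw [hold v hv']
      split_ifs <;> omega
  · rw [Finset.sum_Icc_succ_top (by omega), hnew, Finset.sum_congr rfl hold,
      Finset.sum_add_distrib, Finset.sum_ite_mem, Finset.inter_eq_right.2 hS, Finset.sum_const,
      smul_eq_mul, hSm]
    linarith [hg.sum_deg_le]

theorem le_card_lowDegSet (hg : Admissible m n g) (hd : 2 * m < d) (hn : m ≤ n) :
    m ≤ #(lowDegSet d g n) := by
  have hsub : Finset.Icc (n - m + 1) n ⊆ lowDegSet d g n := fun v hv => by
    have hv' := Finset.mem_Icc.1 hv
    have hmem : v ∈ Finset.Icc 1 n := Finset.mem_Icc.2 (by omega)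
    have := hg.deg_add_le v hmem
    exact Finset.mem_filter.2 ⟨hmem, by omega⟩
  have := Finset.card_le_card hsub
  rw [Nat.card_Icc] at this
  omega

theorem le_mul_card_lowDegSet (hg : Admissible m n g) (hd : 2 * m < d) :
    n ≤ (2 * m + 1) * #(lowDegSet d g n) := by
  have hhigh : #{v ∈ Finset.Icc 1 n | ¬ graphDeg g v < d} * (2 * m + 1) ≤ 2 * m * n := by
    refine le_trans ?_ hg.sum_deg_le
    rw [← smul_eq_mul]
    refine (Finset.card_nsmul_le_sum _ _ _ fun v hv => ?_).trans
      (Finset.sum_le_sum_of_subset (Finset.filter_subset _ _))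
    have := (Finset.mem_filter.1 hv).2
    omega
  have hsum := Finset.card_filter_add_card_filter_not (s := Finset.Icc 1 n)
    (fun v => graphDeg g v < d)
  rw [Nat.card_Icc, Nat.add_sub_cancel] at hsum
  rw [lowDegSet]
  nlinarith

theorem finite_setOf (m n : ℕ) : {g | Admissible m n g}.Finite := by
  have hfin : ((fun g : SimpleGraph ℕ => g.edgeSet) '' {g | Admissible m n g}).Finite :=
    (Finset.finite_toSet (Finset.Icc 1 n).sym2).finite_subsets.subset <| by
      rintro _ ⟨g, hg, rfl⟩ e he
      induction e with
      | _ a b =>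
        exact Finset.mk_mem_sym2_iff.2
          ⟨hg.support_subset ⟨b, he⟩, hg.support_subset ⟨a, Adj.symm he⟩⟩
  exact hfin.of_finite_image edgeSet_injective.injOn

end Admissible

end Admissible

section UniformSubset

variable {α : Type*} {A : Finset α} {m : ℕ}

/-- Double counting: each `S` satisfies `P v S` for at most `m` of the `v`, as these lie in `S`. -/
theorem card_mul_le_expect_powersetCard {E : Finset α} {P : α → Finset α → Prop}
    {Q : Finset α → Prop} [∀ v S, Decidable (P v S)] [DecidablePred Q] {c : ℝ} (hm : m ≠ 0)
    (hP : ∀ v ∈ E, ∀ S ∈ A.powersetCard m, P v S → v ∈ S ∧ Q S)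
    (hc : ∀ v ∈ E, m * c ≤ 𝔼 S ∈ A.powersetCard m, (if P v S then 1 else 0 : ℝ)) :
    #E * c ≤ 𝔼 S ∈ A.powersetCard m, (if Q S then 1 else 0 : ℝ) := by
  have hpoint : ∀ S ∈ A.powersetCard m,
      ∑ v ∈ E, (if P v S then (1 : ℝ) else 0) ≤ m * if Q S then 1 else 0 := by
    intro S hS
    split_ifs with hQ
    · have hsub : {v ∈ E | P v S} ⊆ S := fun v hv =>
        (hP v (Finset.mem_filter.1 hv).1 S hS (Finset.mem_filter.1 hv).2).1
      rw [Finset.sum_boole, mul_one, ← (Finset.mem_powersetCard.1 hS).2]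
      exact_mod_cast Finset.card_le_card hsub
    · rw [mul_zero]
      exact (Finset.sum_eq_zero fun v hv => if_neg fun h => hQ (hP v hv S hS h).2).le
  have hm' : (0 : ℝ) < m := by exact_mod_cast hm.bot_lt
  refine le_of_mul_le_mul_left ?_ hm'
  calc (m : ℝ) * (#E * c) = ∑ _v ∈ E, m * c := by rw [Finset.sum_const, nsmul_eq_mul]; ring
    _ ≤ ∑ v ∈ E, 𝔼 S ∈ A.powersetCard m, (if P v S then 1 else 0 : ℝ) := Finset.sum_le_sum hc
    _ = 𝔼 S ∈ A.powersetCard m, ∑ v ∈ E, (if P v S then 1 else 0 : ℝ) :=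
        (Finset.expect_sum_comm _ _ _).symm
    _ ≤ 𝔼 S ∈ A.powersetCard m, m * (if Q S then 1 else 0 : ℝ) := Finset.expect_le_expect hpoint
    _ = m * 𝔼 S ∈ A.powersetCard m, (if Q S then 1 else 0 : ℝ) := (Finset.mul_expect _ _ _).symm

variable [DecidableEq α]

theorem expect_powersetCard_subset {T : Finset α} (hT : T ⊆ A) (hTm : #T ≤ m) (hm : m ≤ #A) :
    𝔼 S ∈ A.powersetCard m, (if T ⊆ S then 1 else 0 : ℝ) = m.choose #T / (#A).choose #T := by
  have hcount : (#{S ∈ A.powersetCard m | T ⊆ S} : ℝ) * (#A).choose #T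
      = m.choose #T * (#A).choose m := by
    rw [Finset.card_filter_powersetCard_subset T A m hT hTm]
    norm_cast
    rw [mul_comm, ← Nat.choose_mul hTm, mul_comm]
  have hA : ((#A).choose m : ℝ) ≠ 0 := by exact_mod_cast (Nat.choose_pos hm).ne'
  have hAT : ((#A).choose #T : ℝ) ≠ 0 := by
    exact_mod_cast (Nat.choose_pos (hTm.trans hm)).ne'
  rw [Finset.expect_eq_sum_div_card, Finset.sum_boole, Finset.card_powersetCard,
    div_eq_div_iff hA hAT, hcount]

theorem expect_powersetCard_mem {a : α} (ha : a ∈ A) (hm : 1 ≤ m) (hmA : m ≤ #A) :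
    𝔼 S ∈ A.powersetCard m, (if a ∈ S then 1 else 0 : ℝ) = m / #A := by
  simpa using expect_powersetCard_subset (T := {a}) (by simpa using ha) (by simpa using hm) hmA

theorem expect_powersetCard_mem_and_mem {a b : α} (ha : a ∈ A) (hb : b ∈ A) (hab : a ≠ b)
    (hm : 2 ≤ m) (hmA : m ≤ #A) :
    𝔼 S ∈ A.powersetCard m, (if a ∈ S ∧ b ∈ S then 1 else 0 : ℝ)
      = m * (m - 1) / (#A * (#A - 1)) := by
  have h := expect_powersetCard_subset (T := {a, b})
    (by simp [Finset.insert_subset_iff, ha, hb]) (by simpa [Finset.card_pair hab] using hm) hmA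
  simp only [Finset.insert_subset_iff, Finset.singleton_subset_iff, Finset.card_pair hab,
    Nat.cast_choose_two] at h
  rw [h, div_div_div_cancel_right₀ two_ne_zero]

theorem one_sub_le_expect_powersetCard_notMem_and_notMem {a b : α} (ha : a ∈ A) (hb : b ∈ A)
    (hm : 1 ≤ m) (hmA : m ≤ #A) :
    1 - 2 * (m / #A) ≤ 𝔼 S ∈ A.powersetCard m, (if a ∉ S ∧ b ∉ S then 1 else 0 : ℝ) := by
  calc (1 : ℝ) - 2 * (m / #A)
      = 𝔼 S ∈ A.powersetCard m, (1 - (if a ∈ S then 1 else 0) - if b ∈ S then 1 else 0) := by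
        rw [Finset.expect_sub_distrib, Finset.expect_sub_distrib,
          Finset.expect_const (Finset.powersetCard_nonempty.2 hmA),
          expect_powersetCard_mem ha hm hmA, expect_powersetCard_mem hb hm hmA]
        ring
    _ ≤ _ := Finset.expect_le_expect fun S _ => by
        by_cases hS : a ∈ S <;> by_cases hS' : b ∈ S <;> simp [hS, hS']

theorem le_expect_powersetCard_mem_and_notMem {a b : α} (ha : a ∈ A) (hb : b ∈ A)
    (hab : a ≠ b) (hm : 2 ≤ m) (hmA : 2 * m ≤ #A) :
    m / (2 * #A) ≤ 𝔼 S ∈ A.powersetCard m, (if a ∈ S ∧ b ∉ S then 1 else 0 : ℝ) := by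
  have hm' : (2 : ℝ) ≤ m := by exact_mod_cast hm
  have hA : 2 * (m : ℝ) ≤ #A := by exact_mod_cast hmA
  have hsplit : 𝔼 S ∈ A.powersetCard m, (if a ∈ S ∧ b ∉ S then 1 else 0 : ℝ)
      = m / #A - m * (m - 1) / (#A * (#A - 1)) := by
    rw [← expect_powersetCard_mem ha (by omega) (by omega),
      ← expect_powersetCard_mem_and_mem ha hb hab hm (by omega), ← Finset.expect_sub_distrib]
    refine Finset.expect_congr rfl fun S _ => ?_
    by_cases hS : a ∈ S <;> by_cases hS' : b ∈ S <;> simp [hS, hS']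
  have hhalf : (m : ℝ) * (m - 1) / (#A * (#A - 1)) ≤ m / (2 * #A) := by
    rw [div_le_div_iff₀ (by nlinarith) (by linarith)]
    have : 0 ≤ (m : ℝ) * #A * ((#A - 1) - 2 * (m - 1)) :=
      mul_nonneg (by positivity) (by linarith)
    nlinarith
  have hsum : (m : ℝ) / #A = m / (2 * #A) + m / (2 * #A) := by field_simp; norm_num
  rw [hsplit]
  linarith

end UniformSubset

section OpenPath

variable {m d n₀ n K u v : ℕ} {g : SimpleGraph ℕ} {S : Finset ℕ}

/-- Open paths, the building blocks of the cycles to come: `g` has a path with `K` edges from `v`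
to `u`, with all vertices in `(n₀, n]`, whose ends still accept edges. Such a path is grown at its
newest end `v`; the asymmetry of the degree bounds allows for the edge that `v = u` receives when
the path is grown from a single vertex. -/
def OpenPath (m n₀ n K : ℕ) (g : SimpleGraph ℕ) (v u : ℕ) : Prop :=
  ∃ p : g.Walk v u, p.IsPath ∧ p.length = K ∧ (∀ w ∈ p.support, w ∈ Finset.Ioc n₀ n) ∧
    graphDeg g v ≤ m ∧ graphDeg g u ≤ m + 1

namespace OpenPath

theorem left_mem_Ioc (h : OpenPath m n₀ n K g v u) : v ∈ Finset.Ioc n₀ n := by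
  obtain ⟨p, -, -, hsupp, -⟩ := h
  exact hsupp v p.start_mem_support

theorem right_mem_Ioc (h : OpenPath m n₀ n K g v u) : u ∈ Finset.Ioc n₀ n := by
  obtain ⟨p, -, -, hsupp, -⟩ := h
  exact hsupp u p.end_mem_support

theorem left_ne_succ (h : OpenPath m n₀ n K g v u) : v ≠ n + 1 := by
  have := (Finset.mem_Ioc.1 h.left_mem_Ioc).2
  omega

theorem right_ne_succ (h : OpenPath m n₀ n K g v u) : u ≠ n + 1 := by
  have := (Finset.mem_Ioc.1 h.right_mem_Ioc).2
  omega

theorem left_mem_lowDegSet (h : OpenPath m n₀ n K g v u) (hd : m < d) :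
    v ∈ lowDegSet d g n := by
  have hmem := Finset.mem_Ioc.1 h.left_mem_Ioc
  obtain ⟨-, -, -, -, hv, -⟩ := h
  exact Finset.mem_filter.2 ⟨Finset.mem_Icc.2 (by omega), by omega⟩

theorem right_mem_lowDegSet (h : OpenPath m n₀ n K g v u) (hd : m + 1 < d) :
    u ∈ lowDegSet d g n := by
  have hmem := Finset.mem_Ioc.1 h.right_mem_Ioc
  obtain ⟨-, -, -, -, -, hu⟩ := h
  exact Finset.mem_filter.2 ⟨Finset.mem_Icc.2 (by omega), by omega⟩

theorem left_ne_right (h : OpenPath m n₀ n K g v u) (hK : K ≠ 0) : v ≠ u := by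
  rintro rfl
  obtain ⟨p, hp, rfl, -⟩ := h
  exact hK (Walk.length_eq_zero_iff.2 (Walk.isPath_iff_nil.1 hp))

theorem attachStep (h : OpenPath m n₀ n K g v u) (hv : v ∉ S) (hu : u ∉ S) :
    OpenPath m n₀ (n + 1) K (attachStep g (n + 1) S) v u := by
  have hvdeg := graphDeg_attachStep_of_notMem (g := g) h.left_ne_succ hv
  have hudeg := graphDeg_attachStep_of_notMem (g := g) h.right_ne_succ hu
  obtain ⟨p, hp, hlen, hsupp, hdv, hdu⟩ := h
  refine ⟨p.mapLe le_attachStep, hp.mapLe _, by simpa using hlen, fun w hw => ?_, by omega,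
    by omega⟩
  exact Finset.Ioc_subset_Ioc_right n.le_succ (hsupp w (by simpa using hw))

theorem exists_isPath_cons (h : OpenPath m n₀ n K g v u)
    (hv : (_root_.attachStep g (n + 1) S).Adj (n + 1) v) :
    ∃ p : (_root_.attachStep g (n + 1) S).Walk (n + 1) u, p.IsPath ∧ p.length = K + 1 ∧
      ∀ w ∈ p.support, w ∈ Finset.Ioc n₀ (n + 1) := by
  have hn := Finset.mem_Ioc.1 h.left_mem_Ioc
  obtain ⟨p, hp, hlen, hsupp, -⟩ := h
  have hnew : n + 1 ∉ p.support := fun hmem => by simpa using hsupp _ hmem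
  refine ⟨(p.mapLe le_attachStep).cons hv, (hp.mapLe _).cons (by simpa using hnew),
    by simpa using hlen, fun w hw => ?_⟩
  simp only [Walk.support_cons, List.mem_cons, Walk.support_mapLe_eq_support] at hw
  rcases hw with rfl | hw
  · exact Finset.mem_Ioc.2 (by omega)
  · exact Finset.Ioc_subset_Ioc_right n.le_succ (hsupp w hw)

theorem cons (h : OpenPath m n₀ n K g v u) (hg : Admissible m n g) (hS : S ⊆ Finset.Icc 1 n)
    (hSm : #S = m) (hv : v ∈ S) (hu : u ∉ S ∨ u = v) :
    OpenPath m n₀ (n + 1) (K + 1) (_root_.attachStep g (n + 1) S) (n + 1) u := by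
  have hnS : n + 1 ∉ S := fun h => by simpa using hS h
  obtain ⟨p, hp, hlen, hsupp⟩ :=
    h.exists_isPath_cons ((attachStep_adj_self hg.succ_notMem_support hnS).2 hv)
  refine ⟨p, hp, hlen, hsupp, ?_, ?_⟩
  · rw [graphDeg_attachStep_self hg.succ_notMem_support hnS, hSm]
  · have hdeg := graphDeg_attachStep (S := S) h.right_ne_succ hg.succ_notMem_support
      (hg.finite_neighborSet u)
    obtain ⟨-, -, -, -, hdv, hdu⟩ := h
    rcases hu with hu | rfl
    · simpa [hdeg, hu] using hdu
    · simpa [hdeg, hv] using hdv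

theorem nil (hg : Admissible m n g) (hS : S ⊆ Finset.Icc 1 n) (hSm : #S = m) (hn : n₀ ≤ n) :
    OpenPath m n₀ (n + 1) 0 (_root_.attachStep g (n + 1) S) (n + 1) (n + 1) := by
  have hdeg := graphDeg_attachStep_self hg.succ_notMem_support
    (fun h => by simpa using hS h : n + 1 ∉ S)
  refine ⟨.nil, Walk.IsPath.nil, rfl, fun w hw => ?_, by omega, by omega⟩
  obtain rfl : w = n + 1 := by simpa using hw
  exact Finset.mem_Ioc.2 (by omega)

end OpenPath

open Classical in
/-- The newest ends of the open paths with `K` edges; their number serves as a lower bound for the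
number of open paths. -/
noncomputable def openEnds (m n₀ n K : ℕ) (g : SimpleGraph ℕ) : Finset ℕ :=
  {v ∈ Finset.Icc 1 n | ∃ u, OpenPath m n₀ n K g v u}

theorem mem_openEnds : v ∈ openEnds m n₀ n K g ↔ ∃ u, OpenPath m n₀ n K g v u := by
  simp only [openEnds, Finset.mem_filter, and_iff_right_iff_imp]
  rintro ⟨u, hu⟩
  have := Finset.mem_Ioc.1 hu.left_mem_Ioc
  exact Finset.mem_Icc.2 (by omega)

theorem exists_forall_mem_openEnds (m n₀ n K : ℕ) (g : SimpleGraph ℕ) : ∃ first : ℕ → ℕ,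
    ∀ v ∈ openEnds m n₀ n K g, OpenPath m n₀ n K g v (first v) := by
  have h : ∀ v ∈ openEnds m n₀ n K g, ∃ u, OpenPath m n₀ n K g v u := fun v => mem_openEnds.1
  choose! first hfirst using h
  exact ⟨first, hfirst⟩

open Classical in
theorem card_openEnds_le : #(openEnds m n₀ n K g) ≤ n :=
  (Finset.card_filter_le _ _).trans (by simp)

end OpenPath

section CycleTop

theorem exists_copy_cycleGraph_of_isPath {V : Type*} {G : SimpleGraph V} {a b : V}
    {p : G.Walk a b} {r : ℕ} (hp : p.IsPath) (hba : G.Adj b a) (hr : p.length + 1 = r) :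
    ∃ f : Copy (cycleGraph r) G, ∀ i, f i = p.getVert i := by
  subst hr
  have hadj : ∀ i j : Fin (p.length + 1), (i - j).val = 1 →
      G.Adj (p.getVert i) (p.getVert j) := by
    intro i j hij
    rcases le_or_gt j i with hji | hij'
    · rw [Fin.sub_val_of_le hji] at hij
      rw [show (i : ℕ) = j + 1 by omega]
      exact (p.adj_getVert_succ (by omega)).symm
    · rw [Fin.coe_sub_iff_lt.2 hij'] at hij
      rw [show (i : ℕ) = 0 by omega, show (j : ℕ) = p.length by omega, p.getVert_zero,
        p.getVert_length]
      exact hba.symm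
  refine ⟨⟨⟨fun i => p.getVert i, fun {i j} hij => ?_⟩, fun i j hij => ?_⟩, fun _ => rfl⟩
  · exact (cycleGraph_adj'.1 hij).elim (hadj i j) fun h => (hadj j i h).symm
  · exact Fin.ext (hp.getVert_injOn (Nat.le_of_lt_succ i.2) (Nat.le_of_lt_succ j.2) hij)

theorem finite_copy {α V : Type*} [Finite α] {A : SimpleGraph α} {G : SimpleGraph V}
    (hA : A.support = Set.univ) (hG : G.support.Finite) : Finite (Copy A G) := by
  have : Finite G.support := hG
  have hmem : ∀ (f : Copy A G) a, f a ∈ G.support := fun f a => by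
    obtain ⟨b, hab⟩ : a ∈ A.support := hA ▸ Set.mem_univ a
    exact ⟨f b, f.toHom.map_adj hab⟩
  refine Finite.of_injective (fun f a => (⟨f a, hmem f a⟩ : G.support)) fun f f' hff' => ?_
  exact DFunLike.ext _ _ fun a => congrArg Subtype.val (congrFun hff' a)

theorem support_cycleGraph_eq_univ {r : ℕ} (hr : 2 ≤ r) : (cycleGraph r).support = Set.univ := by
  obtain ⟨k, rfl⟩ := Nat.exists_eq_add_of_le' hr
  exact Set.eq_univ_of_forall fun i => ⟨i + 1, by simp [cycleGraph_adj]⟩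

variable {m n₀ n N K r u v : ℕ} {g : SimpleGraph ℕ} {S : Finset ℕ}

/-- `v` is the largest vertex of a cycle of length `r` of `g` all of whose vertices are above `n₀`.
Cycles are counted through their largest vertices, since attaching a new vertex does not affect
the property for the old ones. -/
def IsCycleTop (n₀ r : ℕ) (g : SimpleGraph ℕ) (v : ℕ) : Prop :=
  ∃ f : Copy (cycleGraph r) g, (∀ i, f i ∈ Finset.Ioc n₀ v) ∧ ∃ i, f i = v

theorem OpenPath.isCycleTop (h : OpenPath m n₀ n K g v u) (hg : n + 1 ∉ g.support)
    (hS : n + 1 ∉ S) (hv : v ∈ S) (hu : u ∈ S) :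
    IsCycleTop n₀ (K + 2) (_root_.attachStep g (n + 1) S) (n + 1) := by
  have hadj := fun b => attachStep_adj_self (b := b) hg hS
  obtain ⟨p, hp, hlen, hsupp⟩ := h.exists_isPath_cons ((hadj v).2 hv)
  obtain ⟨f, hf⟩ := exists_copy_cycleGraph_of_isPath (r := K + 2) hp ((hadj u).2 hu).symm
    (by rw [hlen])
  exact ⟨f, fun i => hf i ▸ hsupp _ (p.getVert_mem_support i), 0, by simp [hf]⟩

theorem isCycleTop_attachStep (hv : v ≤ n) :
    IsCycleTop n₀ r (attachStep g (n + 1) S) v ↔ IsCycleTop n₀ r g v := by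
  constructor
  · rintro ⟨f, hf, hfv⟩
    have hne : ∀ i, f i ≠ n + 1 := fun i => by
      have := (Finset.mem_Ioc.1 (hf i)).2
      omega
    exact ⟨⟨⟨f, fun hij => (attachStep_adj_of_ne (hne _) (hne _)).1 (f.toHom.map_adj hij)⟩,
      f.injective⟩, hf, hfv⟩
  · rintro ⟨f, hf, hfv⟩
    exact ⟨(Copy.ofLE _ _ le_attachStep).comp f, hf, hfv⟩

open Classical in
/-- The vertices of `[N]` that are the largest vertex of a cycle of length `r` above `n₀`. -/
noncomputable def cycleTops (n₀ r N : ℕ) (g : SimpleGraph ℕ) : Finset ℕ :=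
  {v ∈ Finset.Icc 1 N | IsCycleTop n₀ r g v}

theorem mem_cycleTops : v ∈ cycleTops n₀ r N g ↔ v ∈ Finset.Icc 1 N ∧ IsCycleTop n₀ r g v := by
  simp only [cycleTops, Finset.mem_filter]

theorem cycleTops_mono (h : N ≤ n) : cycleTops n₀ r N g ⊆ cycleTops n₀ r n g := fun _ hv =>
  mem_cycleTops.2 ⟨Finset.Icc_subset_Icc_right h (mem_cycleTops.1 hv).1, (mem_cycleTops.1 hv).2⟩

theorem cycleTops_attachStep (h : N ≤ n) :
    cycleTops n₀ r N (attachStep g (n + 1) S) = cycleTops n₀ r N g := by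
  ext v
  rw [mem_cycleTops, mem_cycleTops]
  exact and_congr_right fun hv => isCycleTop_attachStep ((Finset.mem_Icc.1 hv).2.trans h)

theorem card_cycleTops_succ_attachStep :
    #(cycleTops n₀ r (n + 1) (attachStep g (n + 1) S)) = #(cycleTops n₀ r n g) +
      if n + 1 ∈ cycleTops n₀ r (n + 1) (attachStep g (n + 1) S) then 1 else 0 := by
  have hold : (cycleTops n₀ r (n + 1) (attachStep g (n + 1) S)).erase (n + 1)
      = cycleTops n₀ r n g := by
    rw [← cycleTops_attachStep (S := S) (le_refl n)]
    ext v
    simp only [Finset.mem_erase, mem_cycleTops, Finset.mem_Icc]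
    grind
  rw [← hold]
  split_ifs with h
  · exact (Finset.card_erase_add_one h).symm
  · rw [Finset.erase_eq_of_notMem h, add_zero]

theorem IsCycleTop.exists_subgraph (h : IsCycleTop n₀ r g v) :
    ∃ C : g.Subgraph, (C.verts ⊆ {v | n₀ < v} ∧ Nonempty (C.coe ≃g cycleGraph r)) ∧
      IsGreatest C.verts v := by
  obtain ⟨f, hf, i, hi⟩ := h
  have hverts : f.toSubgraph.verts = Set.range f := by simp [Copy.toSubgraph]
  refine ⟨f.toSubgraph, ⟨?_, ⟨f.isoToSubgraph.symm⟩⟩, ?_⟩ <;> rw [hverts]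
  · rintro _ ⟨j, rfl⟩
    exact (Finset.mem_Ioc.1 (hf j)).1
  · refine ⟨⟨i, hi⟩, ?_⟩
    rintro _ ⟨j, rfl⟩
    exact (Finset.mem_Ioc.1 (hf j)).2

theorem finite_setOf_iso_cycleGraph (hr : 2 ≤ r) (hg : g.support.Finite) :
    {C : g.Subgraph | Nonempty (C.coe ≃g cycleGraph r)}.Finite := by
  have := finite_copy (support_cycleGraph_eq_univ hr) hg
  refine (Set.finite_range (Copy.toSubgraph (A := cycleGraph r) (B := g))).subset ?_
  rintro C ⟨e⟩
  rw [Copy.range_toSubgraph]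
  exact ⟨e.symm⟩

theorem card_cycleTops_le_cycleCountOutside (hr : 2 ≤ r) (hg : g.support.Finite) :
    #(cycleTops n₀ r N g) ≤ cycleCountOutside g r n₀ := by
  have hex : ∀ v ∈ cycleTops n₀ r N g, ∃ C : g.Subgraph,
      (C.verts ⊆ {v | n₀ < v} ∧ Nonempty (C.coe ≃g cycleGraph r)) ∧ IsGreatest C.verts v :=
    fun v hv => (mem_cycleTops.1 hv).2.exists_subgraph
  choose! C hC using hex
  rw [cycleCountOutside, ← Set.ncard_coe_finset]
  refine Set.ncard_le_ncard_of_injOn C (fun v hv => (hC v hv).1) (fun v hv w hw h => ?_)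
    ((finite_setOf_iso_cycleGraph hr hg).subset fun C hC => hC.2)
  exact (hC v hv).2.unique (h ▸ (hC w hw).2)

end CycleTop

section Drift

variable {m d n₀ n K r : ℕ} {g : SimpleGraph ℕ} {S : Finset ℕ}

/-- The transition operator of the attachment process: the mean of `f` over the graphs obtained
from `g` by joining `n + 1` to a uniformly random `m`-element subset of `lowDegSet d g n`. -/
noncomputable def attachMean (m d n : ℕ) (f : SimpleGraph ℕ → ℝ) (g : SimpleGraph ℕ) : ℝ :=
  𝔼 S ∈ (lowDegSet d g n).powersetCard m, f (attachStep g (n + 1) S)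

theorem subset_Icc_of_mem_powersetCard (hS : S ∈ (lowDegSet d g n).powersetCard m) :
    S ⊆ Finset.Icc 1 n :=
  (Finset.mem_powersetCard.1 hS).1.trans lowDegSet_subset

theorem succ_notMem_of_mem_powersetCard (hS : S ∈ (lowDegSet d g n).powersetCard m) :
    n + 1 ∉ S := fun h => by simpa using subset_Icc_of_mem_powersetCard hS h

theorem Admissible.attachMean_eq_of_forall (hg : Admissible m n g) (hd : 2 * m < d) (hn : m ≤ n)
    {f : SimpleGraph ℕ → ℝ} {c : ℝ}
    (h : ∀ S ∈ (lowDegSet d g n).powersetCard m, f (_root_.attachStep g (n + 1) S) = c) :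
    attachMean m d n f g = c :=
  (Finset.expect_congr rfl h).trans
    (Finset.expect_const (Finset.powersetCard_nonempty.2 (hg.le_card_lowDegSet hd hn)) c)

theorem sum_survive_add_le_card_openEnds {first : ℕ → ℕ}
    (hfirst : ∀ v ∈ openEnds m n₀ n K g, OpenPath m n₀ n K g v (first v)) :
    ∑ v ∈ openEnds m n₀ n K g, (if v ∉ S ∧ first v ∉ S then 1 else 0 : ℝ) +
        (if n + 1 ∈ openEnds m n₀ (n + 1) K (attachStep g (n + 1) S) then 1 else 0) ≤
      #(openEnds m n₀ (n + 1) K (attachStep g (n + 1) S)) := by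
  set E' := openEnds m n₀ (n + 1) K (attachStep g (n + 1) S)
  have hsub : {v ∈ openEnds m n₀ n K g | v ∉ S ∧ first v ∉ S} ⊆ E'.erase (n + 1) := by
    intro v hv
    obtain ⟨hvE, hvS, huS⟩ := Finset.mem_filter.1 hv
    exact Finset.mem_erase.2 ⟨(hfirst v hvE).left_ne_succ,
      mem_openEnds.2 ⟨_, (hfirst v hvE).attachStep hvS huS⟩⟩
  have hcard := Finset.card_le_card hsub
  rw [Finset.sum_boole]
  split_ifs with h
  · rw [← Finset.card_erase_add_one h]
    exact_mod_cast Nat.add_le_add_right hcard 1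
  · rw [Finset.erase_eq_of_notMem h] at hcard
    simpa using hcard

namespace Admissible

theorem div_card_lowDegSet_le (hg : Admissible m n g) (hd : 2 * m < d) (hm : m ≠ 0)
    (hn : m ≤ n) : (m : ℝ) / #(lowDegSet d g n) ≤ m * (2 * m + 1) / n := by
  have hL : (0 : ℝ) < #(lowDegSet d g n) := by
    exact_mod_cast (hg.le_card_lowDegSet hd hn).trans_lt' hm.bot_lt
  have hn' : (0 : ℝ) < n := by exact_mod_cast hn.trans_lt' hm.bot_lt
  have hle : (n : ℝ) ≤ (2 * m + 1) * #(lowDegSet d g n) := by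
    exact_mod_cast hg.le_mul_card_lowDegSet hd
  rw [div_le_div_iff₀ hL hn', mul_assoc]
  exact mul_le_mul_of_nonneg_left hle m.cast_nonneg

theorem drift_card_openEnds (hg : Admissible m n g) (hm : 2 ≤ m) (hd : 2 * m < d) (hn : m ≤ n) :
    (1 - 2 * m * (2 * m + 1) / n) * #(openEnds m n₀ n K g) +
        attachMean m d n (fun g' => if n + 1 ∈ openEnds m n₀ (n + 1) K g' then 1 else 0) g ≤
      attachMean m d n (fun g' => #(openEnds m n₀ (n + 1) K g')) g := by
  obtain ⟨first, hfirst⟩ := exists_forall_mem_openEnds m n₀ n K g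
  refine le_trans ?_ (Finset.expect_le_expect fun S _ => sum_survive_add_le_card_openEnds hfirst)
  rw [Finset.expect_add_distrib, Finset.expect_sum_comm]
  refine add_le_add_left ?_ _
  rw [mul_comm, ← nsmul_eq_mul]
  refine Finset.card_nsmul_le_sum _ _ _ fun v hv => le_trans ?_
    (one_sub_le_expect_powersetCard_notMem_and_notMem
      ((hfirst v hv).left_mem_lowDegSet (by omega)) ((hfirst v hv).right_mem_lowDegSet (by omega))
      (by omega) (hg.le_card_lowDegSet hd hn))
  have := hg.div_card_lowDegSet_le hd (by omega) hn
  rw [mul_assoc, mul_div_assoc]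
  linarith

theorem drift_card_openEnds_zero (hg : Admissible m n g) (hm : 2 ≤ m) (hd : 2 * m < d)
    (hn : m ≤ n) (hn₀ : n₀ ≤ n) :
    (1 - 2 * m * (2 * m + 1) / n) * #(openEnds m n₀ n 0 g) + 1 ≤
      attachMean m d n (fun g' => #(openEnds m n₀ (n + 1) 0 g')) g := by
  refine le_trans (add_le_add_right (ge_of_eq ?_) _) (hg.drift_card_openEnds hm hd hn)
  refine hg.attachMean_eq_of_forall hd hn fun S hS => if_pos (mem_openEnds.2 ⟨n + 1, ?_⟩)
  exact OpenPath.nil hg (subset_Icc_of_mem_powersetCard hS) (Finset.mem_powersetCard.1 hS).2 hn₀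

theorem card_openEnds_le_attachMean_mem_openEnds (hg : Admissible m n g) (hm : 2 ≤ m)
    (hd : 2 * m < d) (hn : 2 * m * (2 * m + 1) ≤ n) :
    #(openEnds m n₀ n K g) * (1 / (2 * n)) ≤ attachMean m d n
      (fun g' => if n + 1 ∈ openEnds m n₀ (n + 1) (K + 1) g' then 1 else 0) g := by
  have hL : 2 * m ≤ #(lowDegSet d g n) := by
    have := hg.le_mul_card_lowDegSet hd
    by_contra! h
    nlinarith
  have hL0 : (0 : ℝ) < #(lowDegSet d g n) := by norm_cast; omega
  have hLn : (#(lowDegSet d g n) : ℝ) ≤ n := by exact_mod_cast card_lowDegSet_le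
  obtain ⟨first, hfirst⟩ := exists_forall_mem_openEnds m n₀ n K g
  refine card_mul_le_expect_powersetCard (P := fun v S => v ∈ S ∧ (first v ∉ S ∨ first v = v))
    (by omega) (fun v hv S hS hvS => ⟨hvS.1, mem_openEnds.2 ⟨_, (hfirst v hv).cons hg
      (subset_Icc_of_mem_powersetCard hS) (Finset.mem_powersetCard.1 hS).2 hvS.1 hvS.2⟩⟩)
    fun v hv => ?_
  have hvL := (hfirst v hv).left_mem_lowDegSet (show m < d by omega)
  have huL := (hfirst v hv).right_mem_lowDegSet (show m + 1 < d by omega)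
  refine le_trans (b := (m : ℝ) / (2 * #(lowDegSet d g n))) ?_ ?_
  · rw [mul_one_div]
    gcongr
  by_cases hvu : first v = v
  · simp only [hvu, or_true, and_true]
    rw [expect_powersetCard_mem hvL (by omega) (by omega)]
    gcongr
    linarith
  · simpa only [hvu, or_false] using
      le_expect_powersetCard_mem_and_notMem hvL huL (Ne.symm hvu) hm hL

theorem drift_card_openEnds_succ (hg : Admissible m n g) (hm : 2 ≤ m) (hd : 2 * m < d)
    (hn : 2 * m * (2 * m + 1) ≤ n) :
    (1 - 2 * m * (2 * m + 1) / n) * #(openEnds m n₀ n (K + 1) g) +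
        #(openEnds m n₀ n K g) * (1 / (2 * n)) ≤
      attachMean m d n (fun g' => #(openEnds m n₀ (n + 1) (K + 1) g')) g :=
  (add_le_add_right (hg.card_openEnds_le_attachMean_mem_openEnds hm hd hn) _).trans
    (hg.drift_card_openEnds hm hd (by nlinarith))

theorem card_openEnds_le_attachMean_mem_cycleTops (hg : Admissible m n g) (hm : 2 ≤ m)
    (hd : 2 * m < d) (hn : m ≤ n) (hK : K ≠ 0) :
    #(openEnds m n₀ n K g) * (1 / (n : ℝ) ^ 2) ≤ attachMean m d n
      (fun g' => if n + 1 ∈ cycleTops n₀ (K + 2) (n + 1) g' then 1 else 0) g := by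
  have hL := hg.le_card_lowDegSet hd hn
  have hm' : (2 : ℝ) ≤ m := by exact_mod_cast hm
  have hL' : (m : ℝ) ≤ #(lowDegSet d g n) := by exact_mod_cast hL
  have hLn : (#(lowDegSet d g n) : ℝ) ≤ n := by exact_mod_cast card_lowDegSet_le
  obtain ⟨first, hfirst⟩ := exists_forall_mem_openEnds m n₀ n K g
  refine card_mul_le_expect_powersetCard (P := fun v S => v ∈ S ∧ first v ∈ S) (by omega)
    (fun v hv S hS hvS => ⟨hvS.1, mem_cycleTops.2 ⟨by simp, (hfirst v hv).isCycleTop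
      hg.succ_notMem_support (succ_notMem_of_mem_powersetCard hS) hvS.1 hvS.2⟩⟩) fun v hv => ?_
  rw [expect_powersetCard_mem_and_mem ((hfirst v hv).left_mem_lowDegSet (by omega))
    ((hfirst v hv).right_mem_lowDegSet (by omega)) ((hfirst v hv).left_ne_right hK) hm hL,
    mul_one_div]
  exact div_le_div₀ (by nlinarith) (by nlinarith) (by nlinarith) (by nlinarith)

end Admissible

end Drift

section FinitelyManyValues

variable {Ω β : Type*} [MeasurableSpace Ω] {μ : Measure Ω} {X : Ω → β} {s : Set β}

theorem integrable_comp_of_ae_mem_finite [IsFiniteMeasure μ]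
    (hX : ∀ b, MeasurableSet {ω | X ω = b}) (hs : s.Finite) (hXs : ∀ᵐ ω ∂μ, X ω ∈ s)
    (f : β → ℝ) : Integrable (fun ω => f (X ω)) μ := by
  classical
  refine (integrable_finsetSum hs.toFinset fun b _ =>
    (integrable_const (f b)).indicator (hX b)).congr ?_
  filter_upwards [hXs] with ω hω
  simp [Set.indicator_apply, hω]

theorem integral_eq_sum_setIntegral_fibre (hX : ∀ b, MeasurableSet {ω | X ω = b})
    (hs : s.Finite) (hXs : ∀ᵐ ω ∂μ, X ω ∈ s) {F : Ω → ℝ} (hF : Integrable F μ) :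
    ∫ ω, F ω ∂μ = ∑ b ∈ hs.toFinset, ∫ ω in {ω | X ω = b}, F ω ∂μ := by
  rw [← integral_biUnion_finset _ (fun b _ => hX b) _ fun b _ => hF.integrableOn,
    Measure.restrict_eq_self_of_ae_mem]
  · filter_upwards [hXs] with ω hω
    simpa using hω
  · intro b _ b' _ hne
    exact Set.disjoint_left.2 fun ω h h' => hne (h.symm.trans h')

end FinitelyManyValues

section StepEvent

variable {m d n : ℕ} {Ω : Type*} {G : ℕ → Ω → SimpleGraph ℕ} {g : SimpleGraph ℕ}

/-- The event that the process passes from `g` at time `n` to `attachStep g (n + 1) S`. -/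
def stepEvent (G : ℕ → Ω → SimpleGraph ℕ) (n : ℕ) (g : SimpleGraph ℕ) (S : Finset ℕ) : Set Ω :=
  {ω | G (n + 1) ω = attachStep g (n + 1) S} ∩ {ω | G n ω = g}

theorem pairwiseDisjoint_stepEvent (hg : Admissible m n g) :
    Set.PairwiseDisjoint ((lowDegSet d g n).powersetCard m) (stepEvent G n g) :=
  fun _ hS _ hT hne => Set.disjoint_left.2 fun _ h h' => hne <|
    injOn_attachStep hg.succ_notMem_support (succ_notMem_of_mem_powersetCard hS)
      (succ_notMem_of_mem_powersetCard hT) (h.1.symm.trans h'.1)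

end StepEvent

namespace IsUAProcess

variable {m d n : ℕ} {Ω : Type*} [MeasurableSpace Ω] {μ : Measure Ω}
  {G : ℕ → Ω → SimpleGraph ℕ} {g : SimpleGraph ℕ}

theorem measurableSet_stepEvent (hG : IsUAProcess m d μ G) (S : Finset ℕ) :
    MeasurableSet (stepEvent G n g S) :=
  (hG.1 _ _).inter (hG.1 _ _)

theorem measureReal_stepEvent (hG : IsUAProcess m d μ G) (hn : m ≤ n) {S : Finset ℕ}
    (hS : S ∈ (lowDegSet d g n).powersetCard m) :
    μ.real (stepEvent G n g S) =
      μ.real {ω | G n ω = g} / #((lowDegSet d g n).powersetCard m) := by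
  rw [Finset.mem_powersetCard] at hS
  rw [measureReal_def, stepEvent, hG.2.2 n hn g S hS.1 hS.2, ENNReal.toReal_div,
    ENNReal.toReal_natCast, Finset.card_powersetCard, measureReal_def]

variable [IsProbabilityMeasure μ]

theorem biUnion_stepEvent_ae_eq (hG : IsUAProcess m d μ G) (hg : Admissible m n g)
    (hd : 2 * m < d) (hn : m ≤ n) :
    (⋃ S ∈ (lowDegSet d g n).powersetCard m, stepEvent G n g S) =ᵐ[μ] {ω | G n ω = g} := by
  refine ae_eq_of_subset_of_measure_ge (Set.iUnion₂_subset fun S _ => Set.inter_subset_right)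
    (le_of_eq ?_) ?_ (measure_ne_top _ _)
  · have hcard : (#((lowDegSet d g n).powersetCard m) : ℝ) ≠ 0 := by
      simpa using (Nat.choose_pos (hg.le_card_lowDegSet hd hn)).ne'
    rw [← measureReal_eq_measureReal_iff (measure_ne_top _ _) (measure_ne_top _ _),
      measureReal_biUnion_finset
      (pairwiseDisjoint_stepEvent hg) fun S _ => hG.measurableSet_stepEvent S,
      Finset.sum_congr rfl fun S hS => hG.measureReal_stepEvent hn hS, Finset.sum_const,
      nsmul_eq_mul, mul_div_cancel₀ _ hcard]
  · exact (Finset.measurableSet_biUnion _ fun S _ =>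
      hG.measurableSet_stepEvent S).nullMeasurableSet

theorem ae_admissible (hG : IsUAProcess m d μ G) (hd : 2 * m < d) (hn : m ≤ n) :
    ∀ᵐ ω ∂μ, Admissible m n (G n ω) := by
  induction n, hn using Nat.le_induction with
  | base => exact .of_forall fun ω => hG.2.1 ω ▸ admissible_initGraph
  | succ n hn ih =>
    have hstep : ∀ᵐ ω ∂μ, ∀ g ∈ {g | Admissible m n g}, G n ω = g →
        ∃ S ∈ (lowDegSet d g n).powersetCard m, ω ∈ stepEvent G n g S := by
      refine (ae_ball_iff (Admissible.finite_setOf m n).countable).2 fun g hg => ?_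
      filter_upwards [(hG.biUnion_stepEvent_ae_eq hg hd hn).mem_iff] with ω hω hωg
      simpa using hω.2 hωg
    filter_upwards [ih, hstep] with ω hadm hω
    obtain ⟨S, hS, hSω⟩ := hω _ hadm rfl
    rw [hSω.1]
    exact hadm.attachStep (subset_Icc_of_mem_powersetCard hS) (Finset.mem_powersetCard.1 hS).2

theorem integrable_comp (hG : IsUAProcess m d μ G) (hd : 2 * m < d) (hn : m ≤ n)
    (f : SimpleGraph ℕ → ℝ) : Integrable (fun ω => f (G n ω)) μ :=
  integrable_comp_of_ae_mem_finite (hG.1 n) (Admissible.finite_setOf m n)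
    (hG.ae_admissible hd hn) f

theorem setIntegral_succ (hG : IsUAProcess m d μ G) (hd : 2 * m < d) (hn : m ≤ n)
    (hg : Admissible m n g) (f : SimpleGraph ℕ → ℝ) :
    ∫ ω in {ω | G n ω = g}, f (G (n + 1) ω) ∂μ = μ.real {ω | G n ω = g} * attachMean m d n f g := by
  rw [← setIntegral_congr_set (hG.biUnion_stepEvent_ae_eq hg hd hn), integral_biUnion_finset _
    (fun S _ => hG.measurableSet_stepEvent S) (pairwiseDisjoint_stepEvent hg)
    fun S _ => (hG.integrable_comp hd (by omega) f).integrableOn, attachMean,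
    Finset.expect_eq_sum_div_card, mul_div_assoc', mul_div_right_comm, Finset.mul_sum]
  refine Finset.sum_congr rfl fun S hS => ?_
  rw [setIntegral_congr_fun (hG.measurableSet_stepEvent S)
    (g := fun _ => f (attachStep g (n + 1) S)) fun ω hω => congrArg f hω.1,
    setIntegral_const, smul_eq_mul, hG.measureReal_stepEvent hn hS]

theorem integral_succ (hG : IsUAProcess m d μ G) (hd : 2 * m < d) (hn : m ≤ n)
    (f : SimpleGraph ℕ → ℝ) :
    ∫ ω, f (G (n + 1) ω) ∂μ = ∫ ω, attachMean m d n f (G n ω) ∂μ := by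
  have hdecomp {F : Ω → ℝ} := integral_eq_sum_setIntegral_fibre (F := F) (hG.1 n)
    (Admissible.finite_setOf m n) (hG.ae_admissible hd hn)
  rw [hdecomp (hG.integrable_comp hd (by omega) f),
    hdecomp (hG.integrable_comp hd hn (attachMean m d n f))]
  refine Finset.sum_congr rfl fun g hg => ?_
  rw [hG.setIntegral_succ hd hn (by simpa using hg), setIntegral_congr_fun (hG.1 n g)
    (g := fun _ => attachMean m d n f g) fun ω hω => congrArg _ hω, setIntegral_const, smul_eq_mul]

theorem integral_mono (hG : IsUAProcess m d μ G) (hd : 2 * m < d) (hn : m ≤ n)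
    {f f' : SimpleGraph ℕ → ℝ} (h : ∀ g, Admissible m n g → f g ≤ f' g) :
    ∫ ω, f (G n ω) ∂μ ≤ ∫ ω, f' (G n ω) ∂μ :=
  integral_mono_ae (hG.integrable_comp hd hn f) (hG.integrable_comp hd hn f')
    ((hG.ae_admissible hd hn).mono fun _ => h _)

end IsUAProcess

section RealSequences

theorem eventually_mul_le_of_drift {b c : ℝ} (hb : 0 ≤ b) (hc : 0 ≤ c) {y : ℕ → ℝ}
    (hy₀ : ∀ n, 0 ≤ y n) (hy : ∀ᶠ n : ℕ in atTop, (1 - b / n) * y n + c ≤ y (n + 1)) :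
    ∀ᶠ n : ℕ in atTop, c / (2 * (b + 1)) * n ≤ y n := by
  obtain ⟨M, hM⟩ := eventually_atTop.1
    (hy.and ((eventually_gt_atTop 0).and (eventually_ge_atTop ⌈b⌉₊)))
  set e := c / (b + 1) with he
  have he₀ : 0 ≤ e := by positivity
  have hce : c = e * (b + 1) := by rw [he]; field_simp
  -- The loss `b / n * (e * (n - M))` is at most `e * b`, leaving the increment `c - e * b = e`.
  have hlinear : ∀ n ≥ M, e * ((n : ℝ) - M) ≤ y n := by
    intro n hn
    induction n, hn using Nat.le_induction with
    | base => simpa using hy₀ M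
    | succ n hn ih =>
      obtain ⟨hstep, hn₀, hbn⟩ := hM n hn
      have hn₀' : (0 : ℝ) < n := by exact_mod_cast hn₀
      have hbn' : b / n ≤ 1 := (div_le_one hn₀').2 (Nat.ceil_le.1 hbn)
      have hloss : b / n * (e * ((n : ℝ) - M)) ≤ e * b := by
        rw [div_mul_eq_mul_div, div_le_iff₀ hn₀']
        have : 0 ≤ b * e * (M : ℝ) := by positivity
        linarith
      have := mul_le_mul_of_nonneg_left ih (sub_nonneg.2 hbn')
      push_cast
      linarith
  filter_upwards [eventually_ge_atTop (2 * M)] with n hn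
  refine le_trans ?_ (hlinear n (by omega))
  have hn' : 2 * (M : ℝ) ≤ n := by exact_mod_cast hn
  rw [mul_comm 2, ← div_div, ← he]
  linarith [mul_le_mul_of_nonneg_left hn' he₀]

theorem not_bddAbove_of_harmonic_increments {c : ℝ} (hc : 0 < c) {V : ℕ → ℝ}
    (h : ∀ᶠ n : ℕ in atTop, V n + c / n ≤ V (n + 1)) : ¬BddAbove (Set.range V) := by
  rintro ⟨B, hB⟩
  obtain ⟨M, hM⟩ := eventually_atTop.1 h
  have hsum : ∀ k, ∑ i ∈ Finset.range k, c / ((i + M : ℕ) : ℝ) ≤ V (k + M) - V M := by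
    intro k
    induction k with
    | zero => simp
    | succ k ih =>
      rw [Finset.sum_range_succ, add_right_comm]
      linarith [hM (k + M) (by omega)]
  have hsummable : Summable fun i : ℕ => c / ((i + M : ℕ) : ℝ) :=
    summable_of_sum_range_le (fun i => by positivity) fun k =>
      (hsum k).trans (sub_le_sub_right (hB ⟨_, rfl⟩) _)
  rw [summable_nat_add_iff (f := fun i : ℕ => c / (i : ℝ))] at hsummable
  simp only [div_eq_mul_one_div c, summable_mul_left_iff hc.ne'] at hsummable
  exact Real.not_summable_one_div_natCast hsummable

theorem limit_nonpos_of_increments {α κ : ℝ} (hκ : 0 < κ) {u V : ℕ → ℝ}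
    (hu : Tendsto u atTop (𝓝 α)) (hV : BddAbove (Set.range V))
    (h : ∀ᶠ N in atTop, ∀ᶠ n : ℕ in atTop, V n + (κ * u N - (u N - u n)) / n ≤ V (n + 1)) :
    α ≤ 0 := by
  by_contra! hα
  have hlim : Tendsto (fun N => κ * u N - (u N - α)) atTop (𝓝 (κ * α)) := by
    simpa using (hu.const_mul κ).sub (hu.sub_const α)
  obtain ⟨N, hN, hNα⟩ :=
    (h.and (hlim.eventually_const_lt (half_lt_self (mul_pos hκ hα)))).exists
  have hlimN := (hu.const_sub (u N)).const_sub (κ * u N)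
  refine not_bddAbove_of_harmonic_increments (half_pos (mul_pos hκ hα)) ?_ hV
  filter_upwards [hN, hlimN.eventually_const_lt hNα] with n hn hnα
  exact le_trans (by gcongr) hn

theorem tendsto_zero_of_increments {m : ℕ} {κ : ℝ} (hκ : 0 < κ) {u V : ℕ → ℝ}
    (hu₀ : ∀ n, 0 ≤ u n) (hu : AntitoneOn u (Set.Ici m)) (hV : BddAbove (Set.range V))
    (h : ∀ᶠ N in atTop, ∀ᶠ n : ℕ in atTop, V n + (κ * u N - (u N - u n)) / n ≤ V (n + 1)) :
    Tendsto u atTop (𝓝 0) := by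
  have hanti : Antitone fun n => u (n + m) := fun i j hij =>
    hu (by simp) (by simp) (Nat.add_le_add_right hij m)
  have hlim := (tendsto_add_atTop_iff_nat m).1
    (tendsto_atTop_ciInf hanti ⟨0, Set.forall_mem_range.2 fun n => hu₀ (n + m)⟩)
  rwa [(limit_nonpos_of_increments hκ hlim hV h).antisymm (ge_of_tendsto' hlim hu₀)] at hlim

end RealSequences

section FewTops

variable {m n₀ r s N n : ℕ} {g : SimpleGraph ℕ} {S : Finset ℕ}

open Classical in
/-- The indicator that fewer than `s` vertices of `[N]` are the top of an `r`-cycle above `n₀`. -/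
noncomputable def fewTops (s n₀ r N : ℕ) (g : SimpleGraph ℕ) : ℝ :=
  if #(cycleTops n₀ r N g) < s then 1 else 0

/-- The number of vertices of `[n]` that are the top of an `r`-cycle above `n₀`, capped at `s`
so as to be bounded in `n`. -/
noncomputable def cappedTops (s n₀ r n : ℕ) (g : SimpleGraph ℕ) : ℝ :=
  (min #(cycleTops n₀ r n g) s : ℕ)

theorem cappedTops_nonneg : 0 ≤ cappedTops s n₀ r n g :=
  Nat.cast_nonneg _

theorem cappedTops_le : cappedTops s n₀ r n g ≤ s := by
  rw [cappedTops]
  exact_mod_cast min_le_right _ _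

theorem fewTops_nonneg : 0 ≤ fewTops s n₀ r N g := by
  unfold fewTops; positivity

theorem fewTops_antitone (h : N ≤ n) : fewTops s n₀ r n g ≤ fewTops s n₀ r N g := by
  have := Finset.card_le_card (cycleTops_mono (n₀ := n₀) (r := r) (g := g) h)
  unfold fewTops
  split_ifs <;> first | omega | norm_num

theorem fewTops_attachStep (h : N ≤ n) :
    fewTops s n₀ r N (attachStep g (n + 1) S) = fewTops s n₀ r N g := by
  rw [fewTops, fewTops, cycleTops_attachStep h]

theorem cappedTops_add_le :
    cappedTops s n₀ r n g +
        (if n + 1 ∈ cycleTops n₀ r (n + 1) (attachStep g (n + 1) S) then 1 else 0) *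
          fewTops s n₀ r n g ≤
      cappedTops s n₀ r (n + 1) (attachStep g (n + 1) S) := by
  rw [cappedTops, cappedTops, fewTops, card_cycleTops_succ_attachStep]
  split_ifs <;> norm_cast <;> omega

end FewTops

theorem attachMean_mul_of_forall {m d n : ℕ} {g : SimpleGraph ℕ} {f w : SimpleGraph ℕ → ℝ}
    (hw : ∀ S, w (attachStep g (n + 1) S) = w g) :
    attachMean m d n (fun g' => f g' * w g') g = attachMean m d n f g * w g := by
  simp only [attachMean, hw, Finset.expect_mul]

namespace IsUAProcess

variable {m d n₀ n N K r s : ℕ} {Ω : Type*} [MeasurableSpace Ω] {μ : Measure Ω}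
  [IsProbabilityMeasure μ] {G : ℕ → Ω → SimpleGraph ℕ} {w : SimpleGraph ℕ → ℝ}

theorem integral_eq_of_forall_attachStep (hG : IsUAProcess m d μ G) (hd : 2 * m < d) (hN : m ≤ N)
    (hw : ∀ n ≥ N, ∀ g S, w (attachStep g (n + 1) S) = w g) (hn : N ≤ n) :
    ∫ ω, w (G n ω) ∂μ = ∫ ω, w (G N ω) ∂μ := by
  induction n, hn using Nat.le_induction with
  | base => rfl
  | succ n hn ih =>
    have hmn := hN.trans hn
    rw [hG.integral_succ hd hmn, ← ih]
    exact integral_congr_ae ((hG.ae_admissible hd hmn).mono fun ω hω =>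
      hω.attachMean_eq_of_forall hd hmn fun S _ => hw n hn _ S)

theorem drift_integral_mul (hG : IsUAProcess m d μ G) (hd : 2 * m < d) (hn : m ≤ n)
    (hw₀ : ∀ g, 0 ≤ w g) (hw : ∀ g S, w (attachStep g (n + 1) S) = w g)
    {a b : ℝ} {f f' F : SimpleGraph ℕ → ℝ}
    (h : ∀ g, Admissible m n g → a * f g + f' g * b ≤ attachMean m d n F g) :
    a * ∫ ω, f (G n ω) * w (G n ω) ∂μ + (∫ ω, f' (G n ω) * w (G n ω) ∂μ) * b ≤
      ∫ ω, F (G (n + 1) ω) * w (G (n + 1) ω) ∂μ := by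
  rw [hG.integral_succ hd hn fun g => F g * w g, ← integral_const_mul, ← integral_mul_const,
    ← integral_add (hG.integrable_comp hd hn fun g => a * (f g * w g))
      (hG.integrable_comp hd hn fun g => f' g * w g * b)]
  refine hG.integral_mono hd hn (f := fun g => a * (f g * w g) + f' g * w g * b) fun g hg => ?_
  rw [attachMean_mul_of_forall (hw g)]
  calc a * (f g * w g) + f' g * w g * b = (a * f g + f' g * b) * w g := by ring
    _ ≤ attachMean m d n F g * w g := mul_le_mul_of_nonneg_right (h g hg) (hw₀ g)

theorem exists_linear_growth_openEnds (hG : IsUAProcess m d μ G) (hm : 2 ≤ m) (hd : 2 * m < d)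
    (n₀ K : ℕ) : ∃ κ > 0, ∀ (w : SimpleGraph ℕ → ℝ) (N : ℕ), m ≤ N → (∀ g, 0 ≤ w g) →
      (∀ n ≥ N, ∀ g S, w (attachStep g (n + 1) S) = w g) →
      ∀ᶠ n : ℕ in atTop, κ * (∫ ω, w (G N ω) ∂μ) * n ≤
        ∫ ω, #(openEnds m n₀ n K (G n ω)) * w (G n ω) ∂μ := by
  have hb : (0 : ℝ) ≤ 2 * m * (2 * m + 1) := by positivity
  induction K with
  | zero =>
    refine ⟨1 / (2 * (2 * m * (2 * m + 1) + 1)), by positivity, fun w N hN hw₀ hw => ?_⟩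
    rw [one_div_mul_eq_div]
    refine eventually_mul_le_of_drift hb (integral_nonneg fun _ => hw₀ _)
      (fun n => integral_nonneg fun _ => mul_nonneg (Nat.cast_nonneg _) (hw₀ _)) ?_
    filter_upwards [eventually_ge_atTop N, eventually_ge_atTop n₀] with n hn hn₀
    rw [← hG.integral_eq_of_forall_attachStep hd hN hw hn]
    simpa using hG.drift_integral_mul hd (hN.trans hn) hw₀ (hw n hn) (f' := 1) (b := 1)
      fun g hg => by simpa using hg.drift_card_openEnds_zero hm hd (hN.trans hn) hn₀
  | succ K ih =>
    obtain ⟨κ, hκ, ih⟩ := ih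
    refine ⟨κ / 2 / (2 * (2 * m * (2 * m + 1) + 1)), by positivity, fun w N hN hw₀ hw => ?_⟩
    have hW : 0 ≤ ∫ ω, w (G N ω) ∂μ := integral_nonneg fun _ => hw₀ _
    rw [div_mul_eq_mul_div]
    refine eventually_mul_le_of_drift hb (by positivity)
      (fun n => integral_nonneg fun _ => mul_nonneg (Nat.cast_nonneg _) (hw₀ _)) ?_
    filter_upwards [ih w N hN hw₀ hw, eventually_ge_atTop N, eventually_gt_atTop 0,
      eventually_ge_atTop (2 * m * (2 * m + 1))] with n hlin hn hn_pos hn'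
    refine le_trans (add_le_add_right ?_ _) (hG.drift_integral_mul hd (hN.trans hn) hw₀ (hw n hn)
      fun g hg => hg.drift_card_openEnds_succ hm hd hn')
    rw [mul_one_div, le_div_iff₀ (by positivity)]
    linarith

theorem integral_cappedTops_add_le (hG : IsUAProcess m d μ G) (hm : 2 ≤ m)
    (hd : 2 * m < d) (hK : K ≠ 0) (hn : m ≤ n) :
    ∫ ω, cappedTops s n₀ (K + 2) n (G n ω) ∂μ +
        (∫ ω, #(openEnds m n₀ n K (G n ω)) * fewTops s n₀ (K + 2) n (G n ω) ∂μ) *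
          (1 / (n : ℝ) ^ 2) ≤
      ∫ ω, cappedTops s n₀ (K + 2) (n + 1) (G (n + 1) ω) ∂μ := by
  rw [hG.integral_succ hd hn (cappedTops s n₀ (K + 2) (n + 1)),
    ← integral_mul_const, ← integral_add
      (hG.integrable_comp hd hn (cappedTops s n₀ (K + 2) n))
      (hG.integrable_comp hd hn fun g =>
        #(openEnds m n₀ n K g) * fewTops s n₀ (K + 2) n g * (1 / (n : ℝ) ^ 2))]
  refine hG.integral_mono hd hn (f := fun g => cappedTops s n₀ (K + 2) n g +
    #(openEnds m n₀ n K g) * fewTops s n₀ (K + 2) n g * (1 / (n : ℝ) ^ 2)) fun g hg => ?_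
  refine le_trans ?_ (Finset.expect_le_expect fun S _ => cappedTops_add_le)
  rw [Finset.expect_add_distrib, ← Finset.expect_mul, mul_right_comm,
    Finset.expect_const (Finset.powersetCard_nonempty.2 (hg.le_card_lowDegSet hd hn))]
  exact add_le_add_right (mul_le_mul_of_nonneg_right
    (hg.card_openEnds_le_attachMean_mem_cycleTops hm hd hn hK) fewTops_nonneg) _

theorem antitoneOn_integral_fewTops (hG : IsUAProcess m d μ G) (hd : 2 * m < d) :
    AntitoneOn (fun n => ∫ ω, fewTops s n₀ r n (G n ω) ∂μ) (Set.Ici m) := by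
  intro N hN n _ hn
  dsimp only
  rw [← hG.integral_eq_of_forall_attachStep hd hN (fun n hn _ _ => fewTops_attachStep hn) hn]
  exact hG.integral_mono hd (hN.trans hn) fun g _ => fewTops_antitone hn

theorem integral_card_openEnds_mul_fewTops_le (hG : IsUAProcess m d μ G) (hd : 2 * m < d)
    (hN : m ≤ N) (hn : N ≤ n) :
    ∫ ω, #(openEnds m n₀ n K (G n ω)) * fewTops s n₀ r N (G n ω) ∂μ -
        (∫ ω, fewTops s n₀ r N (G N ω) ∂μ - ∫ ω, fewTops s n₀ r n (G n ω) ∂μ) * n ≤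
      ∫ ω, #(openEnds m n₀ n K (G n ω)) * fewTops s n₀ r n (G n ω) ∂μ := by
  have hmn := hN.trans hn
  have hint := hG.integrable_comp hd hmn
  rw [← hG.integral_eq_of_forall_attachStep hd hN (fun n hn _ _ => fewTops_attachStep hn) hn,
    ← integral_sub (hint (fewTops s n₀ r N)) (hint (fewTops s n₀ r n)), ← integral_mul_const,
    ← integral_sub (hint fun g => #(openEnds m n₀ n K g) * fewTops s n₀ r N g)
      (hint fun g => (fewTops s n₀ r N g - fewTops s n₀ r n g) * n)]
  refine hG.integral_mono hd hmn (f := fun g => #(openEnds m n₀ n K g) * fewTops s n₀ r N g -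
    (fewTops s n₀ r N g - fewTops s n₀ r n g) * n)
    (f' := fun g => #(openEnds m n₀ n K g) * fewTops s n₀ r n g) fun g _ => ?_
  have hfew : fewTops s n₀ r n g ≤ fewTops s n₀ r N g := fewTops_antitone hn
  have hcard : (#(openEnds m n₀ n K g) : ℝ) ≤ n := by exact_mod_cast card_openEnds_le
  linarith [mul_le_mul_of_nonneg_right hcard (sub_nonneg.2 hfew)]

theorem tendsto_integral_fewTops (hG : IsUAProcess m d μ G) (hm : 2 ≤ m) (hd : 2 * m < d)
    (hK : K ≠ 0) :
    Tendsto (fun n => ∫ ω, fewTops s n₀ (K + 2) n (G n ω) ∂μ) atTop (𝓝 0) := by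
  obtain ⟨κ, hκ, hgrowth⟩ := hG.exists_linear_growth_openEnds hm hd n₀ K
  refine tendsto_zero_of_increments hκ (fun n => integral_nonneg fun _ => fewTops_nonneg)
    (hG.antitoneOn_integral_fewTops hd)
    (V := fun n => ∫ ω, cappedTops s n₀ (K + 2) n (G n ω) ∂μ) ⟨s, ?_⟩ ?_
  · exact Set.forall_mem_range.2 fun n => (integral_mono_of_nonneg
      (.of_forall fun _ => cappedTops_nonneg) (integrable_const _)
      (.of_forall fun _ => cappedTops_le)).trans_eq (by simp)
  filter_upwards [eventually_ge_atTop m] with N hN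
  filter_upwards [hgrowth (fewTops s n₀ (K + 2) N) N hN (fun _ => fewTops_nonneg)
    fun n hn _ _ => fewTops_attachStep hn, eventually_ge_atTop N,
    eventually_gt_atTop 0] with n hlin hn hn_pos
  refine le_trans (add_le_add_right ?_ _)
    (hG.integral_cappedTops_add_le hm hd hK (hN.trans hn))
  have hn_pos' : (0 : ℝ) < n := by exact_mod_cast hn_pos
  rw [mul_one_div, div_le_div_iff₀ hn_pos' (by positivity), sq, ← mul_assoc]
  refine mul_le_mul_of_nonneg_right (le_trans ?_
    (hG.integral_card_openEnds_mul_fewTops_le hd hN hn)) hn_pos'.le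
  linarith

theorem one_sub_integral_fewTops_le (hG : IsUAProcess m d μ G) (hd : 2 * m < d) (hn : m ≤ n)
    (hr : 2 ≤ r) :
    ENNReal.ofReal (1 - ∫ ω, fewTops s n₀ r n (G n ω) ∂μ) ≤
      μ {ω | s ≤ cycleCountOutside (G n ω) r n₀} := by
  have hsub : 1 - ∫ ω, fewTops s n₀ r n (G n ω) ∂μ =
      ∫ ω, (1 - fewTops s n₀ r n (G n ω)) ∂μ := by
    rw [integral_sub (integrable_const 1) (hG.integrable_comp hd hn _), integral_const,
      probReal_univ, one_smul]
  rw [hsub]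
  refine (integral_le_measure (s := {ω | s ≤ #(cycleTops n₀ r n (G n ω))})
    (fun ω _ => sub_le_self _ fewTops_nonneg) fun ω hω => ?_).trans (measure_mono_ae ?_)
  · rw [fewTops, if_pos (by simpa using hω), sub_self]
  · filter_upwards [hG.ae_admissible hd hn] with ω hadm hω
    exact le_trans hω (card_cycleTops_le_cycleCountOutside hr
      ((Finset.finite_toSet _).subset hadm.support_subset))

end IsUAProcess

/-- In the bounded-degree uniform attachment process with `m ≥ 2`, for any `s`, any `r ≥ 3`
and any `n₀`, with high probability `G_n` contains at least `s` cycles of length `r` all of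
whose vertices lie in `[n] \ [n₀]`. -/
theorem uniform_attachment_cycle_lower_bound
    (m d : ℕ) (hm : 2 ≤ m) (hd : 2 * m < d)
    {Ω : Type*} [MeasurableSpace Ω] (μ : Measure Ω) [IsProbabilityMeasure μ]
    (G : ℕ → Ω → SimpleGraph ℕ) (hG : IsUAProcess m d μ G)
    (s r n₀ : ℕ) (hr : 3 ≤ r) :
    Tendsto (fun n : ℕ => μ {ω | s ≤ cycleCountOutside (G n ω) r n₀}) atTop (𝓝 1) := by
  obtain ⟨K, hK, rfl⟩ : ∃ K ≠ 0, r = K + 2 := ⟨r - 2, by omega, by omega⟩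
  have hfew : Tendsto (fun n => ∫ ω, fewTops s n₀ (K + 2) n (G n ω) ∂μ) atTop (𝓝 0) :=
    hG.tendsto_integral_fewTops hm hd hK
  have hlim : Tendsto (fun n => ENNReal.ofReal (1 - ∫ ω, fewTops s n₀ (K + 2) n (G n ω) ∂μ))
      atTop (𝓝 1) := by
    simpa using ENNReal.tendsto_ofReal (hfew.const_sub 1)
  refine tendsto_of_tendsto_of_tendsto_of_le_of_le' hlim tendsto_const_nhds ?_
    (.of_forall fun n => prob_le_one)
  filter_upwards [eventually_ge_atTop m] with n hn
  exact hG.one_sub_integral_fewTops_le hd hn (by omega)
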